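/- (Lower bound via reward noise.) If 0 < E_μ[ρ²σ²] < ∞, then the minimax risk satisfies R_n ≥ ( E_μ[ρ²σ²] / (32·e·n) ) · ( 1 − E_μ[ ρ²σ² · 1( ρσ² > Rmax·√(n·E_μ[ρ²σ²]/2) ) ] / E_μ[ρ²σ²] )². -/

import Mathlib

open MeasureTheory ProbabilityTheory Real
open scoped ENNReal BigOperators Classical

/-- A policy assigns to each context a probability mass function over actions. -/
structure Policy (X A : Type*) [MeasurableSpace X] [Fintype A] where
  prob : X → A → ℝ
  nonneg : ∀ x a, 0 ≤ prob x a
  sum_one : ∀ x, ∑ a, prob x a = 1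
  meas : ∀ a, Measurable fun x => prob x a

variable {X A : Type*} [MeasurableSpace X] [Fintype A] [Nonempty A]
  [MeasurableSpace A] [MeasurableSingletonClass A]

/-- Importance weight ρ(x,a) = π(a|x)/μ(a|x). -/
noncomputable def impW (μp πp : Policy X A) (p : X × A) : ℝ :=
  πp.prob p.1 p.2 / μp.prob p.1 p.2

/-- E_μ[f] : expectation of f(x,a) for x ∼ λ, a ∼ μ(·|x). -/
noncomputable def Emu (lam : Measure X) (μp : Policy X A) (f : X × A → ℝ) : ℝ :=
  ∫ x, ∑ a, μp.prob x a * f (x, a) ∂lam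

/-- The distribution P_μ of (x,a) with x ∼ λ, a ∼ μ(·|x). -/
noncomputable def Policy.joint (lam : Measure X) (μp : Policy X A) : Measure (X × A) :=
  lam.bind fun x => Measure.sum fun a : A => ENNReal.ofReal (μp.prob x a) • Measure.dirac (x, a)

/-- Mean reward r*(x,a) of a reward kernel. -/
noncomputable def rstar (D : Kernel (X × A) ℝ) (p : X × A) : ℝ := ∫ r, r ∂(D p)

/-- The value of the target policy π. -/
noncomputable def vpi (lam : Measure X) (πp : Policy X A) (D : Kernel (X × A) ℝ) : ℝ :=
  ∫ x, ∑ a, πp.prob x a * rstar D (x, a) ∂lam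

/-- The joint distribution P_μ^D of ((x,a),r): x ∼ λ, a ∼ μ(·|x), r ∼ D(·|x,a). -/
noncomputable def sampleMeasure (lam : Measure X) (μp : Policy X A) (D : Kernel (X × A) ℝ) :
    Measure ((X × A) × ℝ) :=
  (Policy.joint lam μp).bind fun p => (D p).map fun r => (p, r)

/-- The class R(σ,Rmax) of reward kernels: Markov kernels with finite second moments such
that P_μ-a.s. 0 ≤ r*(x,a) ≤ Rmax(x,a) and Var(r|x,a) ≤ σ(x,a)². -/
def InRewardClass (lam : Measure X) (μp : Policy X A) (σf Rmax : X × A → ℝ)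
    (D : Kernel (X × A) ℝ) : Prop :=
  IsMarkovKernel D ∧ (∀ p, Integrable (fun r => r ^ 2) (D p)) ∧
    (∀ᵐ p ∂Policy.joint lam μp,
      0 ≤ rstar D p ∧ rstar D p ≤ Rmax p ∧ variance id (D p) ≤ σf p ^ 2)

/-- Minimax risk of off-policy evaluation from n i.i.d. samples. -/
noncomputable def minimaxRisk (lam : Measure X) (μp πp : Policy X A)
    (σf Rmax : X × A → ℝ) (n : ℕ) : ℝ≥0∞ :=
  ⨅ (vhat : (Fin n → (X × A) × ℝ) → ℝ) (_ : Measurable vhat),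
    ⨆ (D : Kernel (X × A) ℝ) (_ : InRewardClass lam μp σf Rmax D),
      ∫⁻ ω, ENNReal.ofReal ((vhat ω - vpi lam πp D) ^ 2)
        ∂(Measure.pi fun _ : Fin n => sampleMeasure lam μp D)

/-!
Compare the reward kernels `N(0, σ²)` and `N(m, σ²)` for a mean `0 ≤ m ≤ Rmax`. Their values differ
by `E_π[m]`, while the Hellinger affinity of the two sample laws is at least
`exp (-E_μ[m² / σ²] / 8)` per sample, so Le Cam's two-point method in Hellinger form bounds the
minimax risk below by `E_π[m]² / 4 * exp (-n * E_μ[m² / σ²] / 4)`. By Cauchy–Schwarz the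
most favourable direction for `m` is `ρ * σ²`; it is scaled by `1 / t` with `t = √(n * V / 2)` and
cut off where it would exceed `Rmax`. The resulting constant `1 / (2 * √e)` is better than
`1 / (32 * e)`.
-/

section HellingerTwoPoint

lemma ofReal_sub_sq_eq_edist_sq (x y : ℝ) : ENNReal.ofReal ((x - y) ^ 2) = edist x y ^ 2 := by
  rw [edist_dist, ← ENNReal.ofReal_pow dist_nonneg, Real.dist_eq, sq_abs]

lemma ennreal_add_sq_le (x y : ℝ≥0∞) : (x + y) ^ 2 ≤ 2 * (x ^ 2 + y ^ 2) := by
  simpa [show (2 : ℝ) - 1 = 1 by norm_num] using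
    ENNReal.rpow_add_le_mul_rpow_add_rpow x y one_le_two

variable {Ω : Type*} [MeasurableSpace Ω]

lemma sq_lintegral_mul_le {μ : Measure Ω} {f g : Ω → ℝ≥0∞} (hf : AEMeasurable f μ)
    (hg : AEMeasurable g μ) :
    (∫⁻ ω, f ω * g ω ∂μ) ^ 2 ≤ (∫⁻ ω, f ω ^ 2 ∂μ) * ∫⁻ ω, g ω ^ 2 ∂μ := by
  have holder := ENNReal.lintegral_mul_le_Lp_mul_Lq μ Real.HolderConjugate.two_two hf hg
  simp only [Pi.mul_apply, ENNReal.rpow_two] at holder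
  calc (∫⁻ ω, f ω * g ω ∂μ) ^ 2
      ≤ ((∫⁻ ω, f ω ^ 2 ∂μ) ^ (1 / 2 : ℝ) * (∫⁻ ω, g ω ^ 2 ∂μ) ^ (1 / 2 : ℝ)) ^ 2 := by gcongr
    _ = (∫⁻ ω, f ω ^ 2 ∂μ) * ∫⁻ ω, g ω ^ 2 ∂μ := by
      simp [mul_pow, ← ENNReal.rpow_mul_natCast]

-- `s` is the square root of a likelihood ratio, so `∫⁻ ω, s ω ∂Q` is the Hellinger affinity.
lemma edist_sq_mul_affinity_sq_le {E : Type*} [PseudoEMetricSpace E] [MeasurableSpace E]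
    [OpensMeasurableSpace E] (Q : Measure Ω) [IsProbabilityMeasure Q] {s : Ω → ℝ≥0∞}
    (hs : Measurable s) [IsProbabilityMeasure (Q.withDensity fun ω => s ω ^ 2)] {v : Ω → E}
    (hv : Measurable v) (a b : E) :
    edist a b ^ 2 * (∫⁻ ω, s ω ∂Q) ^ 2 ≤
      2 * (∫⁻ ω, edist a (v ω) ^ 2 ∂Q +
        ∫⁻ ω, edist b (v ω) ^ 2 ∂Q.withDensity fun ω => s ω ^ 2) := by
  have hva : Measurable fun ω => edist a (v ω) := measurable_edist_right.comp hv
  have hvb : Measurable fun ω => edist b (v ω) := measurable_edist_right.comp hv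
  have hs_one : ∫⁻ ω, s ω ^ 2 ∂Q = 1 := by
    simpa using measure_univ (μ := Q.withDensity fun ω => s ω ^ 2)
  have risk_a : (∫⁻ ω, edist a (v ω) * s ω ∂Q) ^ 2 ≤ ∫⁻ ω, edist a (v ω) ^ 2 ∂Q := by
    simpa [hs_one] using sq_lintegral_mul_le hva.aemeasurable (hs.aemeasurable (μ := Q))
  have risk_b : (∫⁻ ω, s ω * edist b (v ω) ∂Q) ^ 2 ≤
      ∫⁻ ω, edist b (v ω) ^ 2 ∂Q.withDensity fun ω => s ω ^ 2 := by
    rw [lintegral_withDensity_eq_lintegral_mul Q (hs.pow_const 2) (hvb.pow_const 2)]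
    simpa [mul_pow] using
      sq_lintegral_mul_le (μ := Q) (hs.mul hvb).aemeasurable (aemeasurable_const (b := 1))
  have triangle : edist a b * ∫⁻ ω, s ω ∂Q ≤
      ∫⁻ ω, edist a (v ω) * s ω ∂Q + ∫⁻ ω, s ω * edist b (v ω) ∂Q := by
    simp_rw [← lintegral_const_mul _ hs,
      ← lintegral_add_left (f := fun ω => edist a (v ω) * s ω) (hva.mul hs), mul_comm (s _),
      ← add_mul]
    gcongr with ω
    exact edist_triangle_right a b (v ω)
  calc edist a b ^ 2 * (∫⁻ ω, s ω ∂Q) ^ 2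
      ≤ (∫⁻ ω, edist a (v ω) * s ω ∂Q + ∫⁻ ω, s ω * edist b (v ω) ∂Q) ^ 2 := by
        rw [← mul_pow]
        gcongr
    _ ≤ _ := (ennreal_add_sq_le _ _).trans (by gcongr)

variable {ι : Type*} [Fintype ι]

lemma lintegral_pi_prod {Y : ι → Type*} [∀ i, MeasurableSpace (Y i)]
    (μ : ∀ i, Measure (Y i)) [∀ i, IsProbabilityMeasure (μ i)] {f : ∀ i, Y i → ℝ≥0∞}
    (hf : ∀ i, Measurable (f i)) :
    ∫⁻ ω, ∏ i, f i (ω i) ∂Measure.pi μ = ∏ i, ∫⁻ y, f i y ∂μ i := by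
  calc ∫⁻ ω, ∏ i, f i (ω i) ∂Measure.pi μ
      = ∏ i, ∫⁻ ω : (∀ j, Y j), f i (ω i) ∂Measure.pi μ :=
        lintegral_prod_eq_prod_lintegral_of_indepFun Finset.univ (fun i (ω : ∀ j, Y j) => f i (ω i))
          (iIndepFun_pi fun i => (hf i).aemeasurable) fun i => (hf i).comp (measurable_pi_apply i)
    _ = ∏ i, ∫⁻ y, f i y ∂μ i :=
        Finset.prod_congr rfl fun i _ => (measurePreserving_eval μ i).lintegral_comp (hf i)

lemma pi_withDensity {Y : ι → Type*} [∀ i, MeasurableSpace (Y i)]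
    (μ : ∀ i, Measure (Y i)) [∀ i, IsProbabilityMeasure (μ i)] {f : ∀ i, Y i → ℝ≥0∞}
    (hf : ∀ i, Measurable (f i)) [∀ i, SigmaFinite ((μ i).withDensity (f i))] :
    Measure.pi (fun i => (μ i).withDensity (f i)) =
      (Measure.pi μ).withDensity fun ω => ∏ i, f i (ω i) := by
  refine Measure.pi_eq fun t ht => ?_
  have prod_indicator (ω : ∀ i, Y i) :
      (Set.univ.pi t).indicator (fun ω => ∏ i, f i (ω i)) ω =
        ∏ i, (t i).indicator (f i) (ω i) := by
    by_cases hω : ω ∈ Set.univ.pi t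
    · rw [Set.indicator_of_mem hω]
      exact Finset.prod_congr rfl fun i _ => (Set.indicator_of_mem (hω i trivial) (f i)).symm
    · obtain ⟨i, hi⟩ := not_forall.1 (Set.mem_univ_pi.not.1 hω)
      rw [Set.indicator_of_notMem hω, Finset.prod_eq_zero (Finset.mem_univ i)
        (Set.indicator_of_notMem hi (f i))]
  simp_rw [withDensity_apply _ (MeasurableSet.univ_pi ht), withDensity_apply _ (ht _),
    ← lintegral_indicator (MeasurableSet.univ_pi ht), ← lintegral_indicator (ht _),
    prod_indicator]
  exact lintegral_pi_prod μ fun i => (hf i).indicator (ht i)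

lemma edist_sq_mul_affinity_pow_le {E : Type*} [PseudoEMetricSpace E] [MeasurableSpace E]
    [OpensMeasurableSpace E] (Q : Measure Ω) [IsProbabilityMeasure Q] {s : Ω → ℝ≥0∞}
    (hs : Measurable s) [IsProbabilityMeasure (Q.withDensity fun y => s y ^ 2)]
    {v : (ι → Ω) → E} (hv : Measurable v) (a b : E) :
    edist a b ^ 2 * (∫⁻ y, s y ∂Q) ^ (2 * Fintype.card ι) ≤
      2 * (∫⁻ ω, edist a (v ω) ^ 2 ∂Measure.pi (fun _ : ι => Q) +
        ∫⁻ ω, edist b (v ω) ^ 2 ∂Measure.pi fun _ : ι => Q.withDensity fun y => s y ^ 2) := by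
  have affinity : ∫⁻ ω, ∏ i, s (ω i) ∂Measure.pi (fun _ : ι => Q) =
      (∫⁻ y, s y ∂Q) ^ Fintype.card ι := by
    simp [lintegral_pi_prod (fun _ : ι => Q) fun _ => hs]
  have pi_eq : Measure.pi (fun _ : ι => Q.withDensity fun y => s y ^ 2) =
      (Measure.pi fun _ => Q).withDensity fun ω => (∏ i, s (ω i)) ^ 2 := by
    simp_rw [pi_withDensity (fun _ : ι => Q) fun _ => hs.pow_const 2, Finset.prod_pow]
  have : IsProbabilityMeasure
      ((Measure.pi fun _ : ι => Q).withDensity fun ω => (∏ i, s (ω i)) ^ 2) :=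
    pi_eq ▸ inferInstance
  rw [pi_eq, mul_comm 2, pow_mul, ← affinity]
  exact edist_sq_mul_affinity_sq_le _ (by fun_prop) hv a b

end HellingerTwoPoint

section GaussianShift

/-- Square root of the likelihood ratio of `gaussianReal m v` to `gaussianReal 0 v`. For `v = 0` the
division by zero makes it `1`, the correct value when also `m = 0`. -/
noncomputable def gaussianShiftSqrtRatio (m : ℝ) (v : NNReal) (x : ℝ) : ℝ≥0∞ :=
  ENNReal.ofReal (exp ((m * x / 2 - m ^ 2 / 4) / v))

@[fun_prop]
lemma measurable_gaussianShiftSqrtRatio {Y : Type*} [MeasurableSpace Y] {m : Y → ℝ} {v : Y → NNReal}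
    {x : Y → ℝ} (hm : Measurable m) (hv : Measurable v) (hx : Measurable x) :
    Measurable fun y => gaussianShiftSqrtRatio (m y) (v y) (x y) := by
  unfold gaussianShiftSqrtRatio
  fun_prop

lemma gaussianReal_eq_withDensity_sqrtRatio_sq {m : ℝ} {v : NNReal} (h : v = 0 → m = 0) :
    gaussianReal m v =
      (gaussianReal 0 v).withDensity fun x => gaussianShiftSqrtRatio m v x ^ 2 := by
  rcases eq_or_ne v 0 with rfl | hv
  · simp [h rfl, gaussianShiftSqrtRatio]
  · rw [gaussianReal_of_var_ne_zero _ hv, gaussianReal_of_var_ne_zero _ hv,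
      ← withDensity_mul _ (by fun_prop) (by fun_prop)]
    congr with x
    rw [Pi.mul_apply, gaussianPDF, gaussianPDF, gaussianShiftSqrtRatio,
      ← ENNReal.ofReal_pow (exp_nonneg _), ← ENNReal.ofReal_mul (gaussianPDFReal_nonneg _ _ _),
      gaussianPDFReal, gaussianPDFReal, ← exp_nat_mul, mul_assoc _ (exp _), ← exp_add]
    congr 3
    field_simp
    ring

lemma lintegral_gaussianShiftSqrtRatio (m : ℝ) (v : NNReal) :
    ∫⁻ x, gaussianShiftSqrtRatio m v x ∂gaussianReal 0 v =
      ENNReal.ofReal (exp (-(m ^ 2 / v) / 8)) := by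
  have split (x : ℝ) : exp ((m * x / 2 - m ^ 2 / 4) / v) =
      exp (-(m ^ 2 / v) / 4) * exp (m / (2 * v) * x) := by
    rw [← exp_add]
    congr 1
    ring
  have exponent : -(m ^ 2 / v) / 4 + v * (m / (2 * v)) ^ 2 / 2 = -(m ^ 2 / v) / 8 := by
    rcases eq_or_ne (v : ℝ) 0 with hv | hv
    · simp [hv]
    · field_simp
      ring
  have mgf_eq := congrFun (mgf_fun_id_gaussianReal (μ := 0) (v := v)) (m / (2 * v))
  rw [mgf, zero_mul, zero_add] at mgf_eq
  simp_rw [gaussianShiftSqrtRatio, split]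
  rw [← ofReal_integral_eq_lintegral_ofReal ((integrable_exp_mul_gaussianReal _).const_mul _)
    (ae_of_all _ fun x => by positivity), integral_const_mul, mgf_eq, ← exp_add, exponent]

variable {Z : Type*} [MeasurableSpace Z]

/-- The Gaussian rewards with mean `m` and variance `v`, among which the two compared reward
kernels are chosen; `v = 0` gives the deterministic reward `m`. -/
noncomputable def gaussianKernel (m : Z → ℝ) (v : Z → NNReal) (hm : Measurable m)
    (hv : Measurable v) : Kernel Z ℝ where
  toFun z := gaussianReal (m z) (v z)
  measurable' := measurable_gaussianReal.comp (hm.prodMk hv)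

variable {m : Z → ℝ} {v : Z → NNReal} (hm : Measurable m) (hv : Measurable v)

lemma gaussianKernel_apply (z : Z) : gaussianKernel m v hm hv z = gaussianReal (m z) (v z) := rfl

instance : IsMarkovKernel (gaussianKernel m v hm hv) :=
  ⟨fun z => by rw [gaussianKernel_apply]; infer_instance⟩

lemma compProd_gaussianKernel (P : Measure Z) [SFinite P] (h : ∀ z, v z = 0 → m z = 0) :
    P ⊗ₘ gaussianKernel m v hm hv =
      (P ⊗ₘ gaussianKernel 0 v measurable_const hv).withDensity
        fun y => gaussianShiftSqrtRatio (m y.1) (v y.1) y.2 ^ 2 := by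
  have ratio_meas : Measurable
      (Function.uncurry fun z x => gaussianShiftSqrtRatio (m z) (v z) x ^ 2) := by
    unfold Function.uncurry
    fun_prop
  have kernel_eq : gaussianKernel m v hm hv =
      (gaussianKernel 0 v measurable_const hv).withDensity
        fun z x => gaussianShiftSqrtRatio (m z) (v z) x ^ 2 := by
    ext1 z
    rw [Kernel.withDensity_apply _ ratio_meas]
    exact gaussianReal_eq_withDensity_sqrtRatio_sq (h z)
  have : IsSFiniteKernel ((gaussianKernel 0 v measurable_const hv).withDensity
        fun z x => gaussianShiftSqrtRatio (m z) (v z) x ^ 2) := kernel_eq ▸ inferInstance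
  rw [kernel_eq]
  exact Measure.compProd_withDensity ratio_meas

-- Jensen's inequality for `exp` turns the affinity into the average information `m ^ 2 / v`.
lemma exp_le_lintegral_compProd_gaussianShiftSqrtRatio (hm : Measurable m) (P : Measure Z)
    [IsProbabilityMeasure P] (hint : Integrable (fun z => m z ^ 2 / v z) P) :
    ENNReal.ofReal (exp (-(∫ z, m z ^ 2 / v z ∂P) / 8)) ≤
      ∫⁻ y, gaussianShiftSqrtRatio (m y.1) (v y.1) y.2
        ∂(P ⊗ₘ gaussianKernel 0 v measurable_const hv) := by
  have info_int : Integrable (fun z => -(m z ^ 2 / v z) / 8) P := hint.neg.div_const 8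
  have exp_int : Integrable (fun z => exp (-(m z ^ 2 / v z) / 8)) P := by
    refine Integrable.of_bound
      (continuous_exp.comp_aestronglyMeasurable info_int.aestronglyMeasurable) 1
      (ae_of_all _ fun z => ?_)
    have : 0 ≤ m z ^ 2 / v z := by positivity
    rw [norm_of_nonneg (exp_nonneg _), exp_le_one_iff]
    linarith
  have jensen := convexOn_exp.map_integral_le continuous_exp.continuousOn isClosed_univ
    (ae_of_all P fun z => Set.mem_univ _) info_int exp_int
  rw [integral_div, integral_neg] at jensen
  rw [Measure.lintegral_compProd (by fun_prop)]
  simp_rw [gaussianKernel_apply, Pi.zero_apply, lintegral_gaussianShiftSqrtRatio]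
  rw [← ofReal_integral_eq_lintegral_ofReal exp_int (ae_of_all _ fun z => exp_nonneg _)]
  exact ENNReal.ofReal_le_ofReal jensen

end GaussianShift

section ImportanceWeight

omit [Nonempty A] [MeasurableSpace A] [MeasurableSingletonClass A]

variable {μp πp : Policy X A}

lemma impW_nonneg (p : X × A) : 0 ≤ impW μp πp p :=
  div_nonneg (πp.nonneg _ _) (μp.nonneg _ _)

lemma prob_mul_impW (habs : ∀ x a, 0 < πp.prob x a → 0 < μp.prob x a) (x : X) (a : A) :
    μp.prob x a * impW μp πp (x, a) = πp.prob x a := by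
  refine mul_div_cancel_of_imp' fun hμ => ?_
  by_contra hπ
  exact (habs x a ((πp.nonneg x a).lt_of_ne' hπ)).ne' hμ

lemma Emu_impW_mul (habs : ∀ x a, 0 < πp.prob x a → 0 < μp.prob x a) (lam : Measure X)
    (f : X × A → ℝ) : Emu lam μp (fun p => impW μp πp p * f p) = Emu lam πp f := by
  simp_rw [Emu, ← mul_assoc, prob_mul_impW habs]

end ImportanceWeight

section PolicyKernel

omit [Nonempty A]

/-- A policy as a Markov kernel from contexts to actions, so that `P_μ` is the composition-product
of the context distribution with this kernel. -/
noncomputable def Policy.toKernel (μp : Policy X A) : Kernel X A where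
  toFun x := ∑ a, ENNReal.ofReal (μp.prob x a) • Measure.dirac a
  measurable' := Measure.measurable_of_measurable_coe _ fun s _ => by
    have := μp.meas
    simp only [Measure.finsetSum_apply, Measure.smul_apply]
    fun_prop

lemma Policy.toKernel_real_singleton (μp : Policy X A) (x : X) (a : A) :
    (μp.toKernel x).real {a} = μp.prob x a := by
  have mass : μp.toKernel x {a} = ENNReal.ofReal (μp.prob x a) := by
    simp [toKernel, Set.indicator_apply, eq_comm]
  rw [measureReal_def, mass, ENNReal.toReal_ofReal (μp.nonneg x a)]

omit [MeasurableSingletonClass A] in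
instance (μp : Policy X A) : IsMarkovKernel μp.toKernel := by
  refine ⟨fun x => ⟨?_⟩⟩
  simp [Policy.toKernel, ← ENNReal.ofReal_sum_of_nonneg fun a _ => μp.nonneg x a, μp.sum_one]

lemma Policy.integral_toKernel (μp : Policy X A) (x : X) (f : A → ℝ) :
    ∫ a, f a ∂μp.toKernel x = ∑ a, μp.prob x a * f a := by
  simp [integral_fintype .of_finite, toKernel_real_singleton]

variable (lam : Measure X) (μp πp : Policy X A)

omit [MeasurableSingletonClass A] in
lemma Policy.joint_eq_compProd [SFinite lam] : Policy.joint lam μp = lam ⊗ₘ μp.toKernel := by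
  rw [Measure.compProd_eq_comp_prod, joint]
  refine congrArg lam.bind (funext fun x => ?_)
  rw [Kernel.prod_apply, Kernel.id_apply, Measure.dirac_prod]
  ext s hs
  simp [Measure.map_apply measurable_prodMk_left hs, toKernel, hs, measurable_prodMk_left hs,
    Set.indicator_apply]

omit [MeasurableSingletonClass A] in
instance [IsProbabilityMeasure lam] : IsProbabilityMeasure (Policy.joint lam μp) := by
  rw [Policy.joint_eq_compProd]
  infer_instance

lemma Emu_eq_integral_joint [SFinite lam] {f : X × A → ℝ}
    (hf : Integrable f (Policy.joint lam μp)) :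
    Emu lam μp f = ∫ p, f p ∂Policy.joint lam μp := by
  rw [Policy.joint_eq_compProd] at hf ⊢
  simp [Measure.integral_compProd hf, Policy.integral_toKernel, Emu]

lemma integrable_joint_of_nonneg [SFinite lam] {f : X × A → ℝ} (hf : Measurable f)
    (hf_nonneg : 0 ≤ f) (hint : Integrable (fun x => ∑ a, μp.prob x a * f (x, a)) lam) :
    Integrable f (Policy.joint lam μp) := by
  rw [Policy.joint_eq_compProd, Measure.integrable_compProd_iff hf.aestronglyMeasurable]
  refine ⟨ae_of_all _ fun x => .of_finite, ?_⟩
  simpa only [Policy.integral_toKernel, norm_of_nonneg (hf_nonneg _)] using hint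

lemma Emu_indicator_compl [SFinite lam] {B : Set (X × A)} (hB : MeasurableSet B) {f : X × A → ℝ}
    (hf : Integrable f (Policy.joint lam μp)) :
    Emu lam μp (Bᶜ.indicator f) = Emu lam μp f - ∫ p in B, f p ∂Policy.joint lam μp := by
  rw [Emu_eq_integral_joint _ _ (hf.indicator hB.compl), Emu_eq_integral_joint _ _ hf,
    integral_indicator hB.compl, setIntegral_compl hB hf]

lemma measurable_impW : Measurable (impW μp πp) :=
  measurable_from_prod_countable_left fun a => (πp.meas a).div (μp.meas a)

end PolicyKernel

section MinimaxRisk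

omit [Nonempty A] [MeasurableSingletonClass A]

variable {lam : Measure X} {μp πp : Policy X A} {σf Rmax : X × A → ℝ}

lemma sampleMeasure_eq_compProd [SFinite (Policy.joint lam μp)] (D : Kernel (X × A) ℝ)
    [IsSFiniteKernel D] : sampleMeasure lam μp D = Policy.joint lam μp ⊗ₘ D := by
  rw [Measure.compProd_eq_comp_prod, sampleMeasure]
  refine congrArg (Measure.bind _) (funext fun p => ?_)
  rw [Kernel.prod_apply, Kernel.id_apply, Measure.dirac_prod]

lemma edist_vpi_sq_mul_affinity_pow_le_minimaxRisk [IsProbabilityMeasure lam]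
    {D₀ D₁ : Kernel (X × A) ℝ} (hD₀ : InRewardClass lam μp σf Rmax D₀)
    (hD₁ : InRewardClass lam μp σf Rmax D₁) {s : (X × A) × ℝ → ℝ≥0∞} (hs : Measurable s)
    (hD : sampleMeasure lam μp D₁ = (sampleMeasure lam μp D₀).withDensity fun y => s y ^ 2)
    (n : ℕ) :
    edist (vpi lam πp D₀) (vpi lam πp D₁) ^ 2 * (∫⁻ y, s y ∂sampleMeasure lam μp D₀) ^ (2 * n) ≤
      4 * minimaxRisk lam μp πp σf Rmax n := by
  have := hD₀.1
  have := hD₁.1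
  have sample_prob (D : Kernel (X × A) ℝ) [IsMarkovKernel D] :
      IsProbabilityMeasure (sampleMeasure lam μp D) := by
    rw [sampleMeasure_eq_compProd]
    infer_instance
  have := sample_prob D₀
  have : IsProbabilityMeasure ((sampleMeasure lam μp D₀).withDensity fun y => s y ^ 2) :=
    hD ▸ sample_prob D₁
  rw [_root_.minimaxRisk]
  simp_rw [ENNReal.mul_iInf_of_ne four_ne_zero ENNReal.ofNat_ne_top]
  refine le_iInf₂ fun vhat hvhat => ?_
  simp_rw [ofReal_sub_sq_eq_edist_sq, edist_comm (vhat _)]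
  have two_point := edist_sq_mul_affinity_pow_le (ι := Fin n) (sampleMeasure lam μp D₀) hs hvhat
    (vpi lam πp D₀) (vpi lam πp D₁)
  rw [← hD, Fintype.card_fin] at two_point
  let risk (D : Kernel (X × A) ℝ) : ℝ≥0∞ :=
    ∫⁻ ω, edist (vpi lam πp D) (vhat ω) ^ 2 ∂Measure.pi fun _ : Fin n => sampleMeasure lam μp D
  let worst_risk : ℝ≥0∞ := ⨆ (D) (_ : InRewardClass lam μp σf Rmax D), risk D
  have risk_le {D} (hD : InRewardClass lam μp σf Rmax D) : risk D ≤ worst_risk :=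
    le_iSup₂_of_le D hD le_rfl
  calc edist (vpi lam πp D₀) (vpi lam πp D₁) ^ 2 * (∫⁻ y, s y ∂sampleMeasure lam μp D₀) ^ (2 * n)
      ≤ 2 * (risk D₀ + risk D₁) := two_point
    _ ≤ 2 * (worst_risk + worst_risk) := by grw [risk_le hD₀, risk_le hD₁]
    _ = 4 * worst_risk := by ring

lemma inRewardClass_gaussianKernel {m : X × A → ℝ} (hm : Measurable m) (hσ : Measurable σf)
    (hm_nonneg : 0 ≤ m) (hm_le : m ≤ Rmax) :
    InRewardClass lam μp σf Rmax
      (gaussianKernel m (fun p => (σf p ^ 2).toNNReal) hm (hσ.pow_const 2).real_toNNReal) := by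
  refine ⟨inferInstance, fun p => (memLp_id_gaussianReal 2).integrable_sq, ae_of_all _ fun p => ?_⟩
  simpa [rstar, gaussianKernel_apply, hm_le p, sq_nonneg] using hm_nonneg p

lemma vpi_gaussianKernel {m : X × A → ℝ} {v : X × A → NNReal} (hm : Measurable m)
    (hv : Measurable v) : vpi lam πp (gaussianKernel m v hm hv) = Emu lam πp m := by
  simp [vpi, Emu, rstar, gaussianKernel_apply]

lemma Emu_sq_mul_exp_le_minimaxRisk [IsProbabilityMeasure lam] {m : X × A → ℝ} (hm : Measurable m)
    (hσ : Measurable σf) (hm_nonneg : 0 ≤ m) (hm_le : m ≤ Rmax)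
    (hm_zero : ∀ p, σf p = 0 → m p = 0)
    (hint : Integrable (fun p => m p ^ 2 / σf p ^ 2) (Policy.joint lam μp)) (n : ℕ) :
    ENNReal.ofReal (Emu lam πp m ^ 2 / 4 *
      exp (-(n * ∫ p, m p ^ 2 / σf p ^ 2 ∂Policy.joint lam μp) / 4)) ≤
      minimaxRisk lam μp πp σf Rmax n := by
  have hv : Measurable fun p => (σf p ^ 2).toNNReal := (hσ.pow_const 2).real_toNNReal
  have coe_v (p) : ((σf p ^ 2).toNNReal : ℝ) = σf p ^ 2 := Real.coe_toNNReal _ (sq_nonneg _)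
  have likelihood := compProd_gaussianKernel hm hv (Policy.joint lam μp) fun p hp =>
    hm_zero p (pow_eq_zero_iff two_ne_zero |>.1 (by rw [← coe_v, hp, NNReal.coe_zero]))
  simp_rw [← sampleMeasure_eq_compProd] at likelihood
  have le_cam := edist_vpi_sq_mul_affinity_pow_le_minimaxRisk (πp := πp)
    (inRewardClass_gaussianKernel (m := 0) measurable_const hσ le_rfl (hm_nonneg.trans hm_le))
    (inRewardClass_gaussianKernel hm hσ hm_nonneg hm_le) (by fun_prop) likelihood n
  have affinity := exp_le_lintegral_compProd_gaussianShiftSqrtRatio hv hm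
    (Policy.joint lam μp) (by simpa only [coe_v] using hint)
  simp_rw [coe_v, ← sampleMeasure_eq_compProd] at affinity
  have value_zero : Emu lam πp 0 = 0 := by simp [Emu]
  rw [vpi_gaussianKernel, vpi_gaussianKernel, value_zero, ← ofReal_sub_sq_eq_edist_sq,
    zero_sub, neg_sq] at le_cam
  refine (ENNReal.mul_le_mul_iff_right four_ne_zero ENNReal.ofNat_ne_top).1 (le_trans ?_ le_cam)
  grw [← affinity]
  rw [← ENNReal.ofReal_pow (exp_nonneg _), ← ENNReal.ofReal_mul (sq_nonneg _), ← exp_nat_mul,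
    ← ENNReal.ofReal_ofNat, ← ENNReal.ofReal_mul zero_le_four]
  refine (congrArg ENNReal.ofReal ?_).le
  push_cast
  ring_nf

end MinimaxRisk

section TruncatedShift

omit [Nonempty A]

variable {lam : Measure X} [IsProbabilityMeasure lam] {μp πp : Policy X A}
  {σf Rmax : X × A → ℝ}

lemma setIntegral_sq_mul_exp_le_minimaxRisk
    (habs : ∀ x a, 0 < πp.prob x a → 0 < μp.prob x a)
    (hσ : Measurable σf) (hR_nonneg : 0 ≤ Rmax) {t : ℝ} (ht : 0 < t) {B : Set (X × A)}
    (hB : MeasurableSet B) (hB_le : ∀ p ∈ B, impW μp πp p * σf p ^ 2 ≤ Rmax p * t)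
    (hint : IntegrableOn (fun p => impW μp πp p ^ 2 * σf p ^ 2) B (Policy.joint lam μp)) (n : ℕ) :
    ENNReal.ofReal
      (((∫ p in B, impW μp πp p ^ 2 * σf p ^ 2 ∂Policy.joint lam μp) / t) ^ 2 / 4 *
        exp (-(n * ((∫ p in B, impW μp πp p ^ 2 * σf p ^ 2 ∂Policy.joint lam μp) / t ^ 2)) / 4)) ≤
      minimaxRisk lam μp πp σf Rmax n := by
  set w : X × A → ℝ := fun p => impW μp πp p ^ 2 * σf p ^ 2
  set m : X × A → ℝ := B.indicator fun p => impW μp πp p * σf p ^ 2 / t with m_def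
  have info (p) : m p ^ 2 / σf p ^ 2 = B.indicator w p / t ^ 2 := by
    by_cases hp : p ∈ B
    · rcases eq_or_ne (σf p) 0 with hσp | hσp
      · simp [m_def, w, hp, hσp]
      · simp only [m_def, w, Set.indicator_of_mem hp]
        field_simp
    · simp [m_def, hp]
  have value : (fun p => impW μp πp p * m p) = fun p => B.indicator w p / t := by
    funext p
    by_cases hp : p ∈ B
    · simp only [m_def, w, Set.indicator_of_mem hp]
      ring
    · simp [m_def, hp]
  have indicator_int : Integrable (B.indicator w) (Policy.joint lam μp) :=
    (integrable_indicator_iff hB).2 hint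
  have value_eq : Emu lam πp m = (∫ p in B, w p ∂Policy.joint lam μp) / t := by
    rw [← Emu_impW_mul habs, value, Emu_eq_integral_joint _ _ (indicator_int.div_const t),
      integral_div, integral_indicator hB]
  have info_eq : ∫ p, m p ^ 2 / σf p ^ 2 ∂Policy.joint lam μp =
      (∫ p in B, w p ∂Policy.joint lam μp) / t ^ 2 := by
    simp_rw [info]
    rw [integral_div, integral_indicator hB]
  rw [← value_eq, ← info_eq]
  refine Emu_sq_mul_exp_le_minimaxRisk ?_ hσ ?_ ?_ ?_ ?_ n
  · exact (((measurable_impW μp πp).mul (hσ.pow_const 2)).div_const t).indicator hB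
  · exact Set.indicator_nonneg fun p _ =>
      div_nonneg (mul_nonneg (impW_nonneg p) (sq_nonneg _)) ht.le
  · exact Set.indicator_le' (fun p hp => (div_le_iff₀ ht).2 (hB_le p hp)) fun p _ => hR_nonneg p
  · intro p hp
    simp [m_def, Set.indicator_apply, hp]
  · simp_rw [info]
    exact indicator_int.div_const _

end TruncatedShift

-- At the threshold `t = √(n * V / 2)` the shift carries information at most `2 / n` per sample.
lemma mul_sq_le_sq_mul_exp_at_threshold {V W n : ℝ} (hV : 0 < V) (hWV : W ≤ V) (hn : 0 < n) :
    V / (2 * exp (1 / 2) * n) * (1 - (V - W) / V) ^ 2 ≤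
      (W / √(n * V / 2)) ^ 2 / 4 * exp (-(n * (W / √(n * V / 2) ^ 2)) / 4) := by
  have exponent : -(n * (W / (n * V / 2))) / 4 = -(W / V) / 2 := by
    field_simp
    norm_num
  have hW_div : W / V ≤ 1 := (div_le_one₀ hV).2 hWV
  rw [div_pow, sq_sqrt (by positivity), exponent]
  calc V / (2 * exp (1 / 2) * n) * (1 - (V - W) / V) ^ 2
      = W ^ 2 / (n * V / 2) / 4 * exp (-1 / 2) := by
        rw [neg_div, exp_neg]
        field_simp
        ring
    _ ≤ W ^ 2 / (n * V / 2) / 4 * exp (-(W / V) / 2) := by gcongr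

omit [Nonempty A] in
theorem minimax_lower_bound_noise_general
    (lam : Measure X) [IsProbabilityMeasure lam] (μp πp : Policy X A)
    (habs : ∀ x a, 0 < πp.prob x a → 0 < μp.prob x a)
    (σf Rmax : X × A → ℝ) (hσm : Measurable σf) (hRm : Measurable Rmax)
    (hRnn : ∀ p, 0 ≤ Rmax p)
    (V : ℝ) (hV : V = Emu lam μp fun p => impW μp πp p ^ 2 * σf p ^ 2)
    (hVpos : 0 < V)
    (hVfin : Integrable
      (fun x => ∑ a, μp.prob x a * (impW μp πp (x, a) ^ 2 * σf (x, a) ^ 2)) lam)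
    (n : ℕ) :
    ENNReal.ofReal
      (V / (2 * Real.exp (1 / 2) * n) *
        (1 - (Emu lam μp fun p =>
            if Rmax p * Real.sqrt (n * V / 2) < impW μp πp p * σf p ^ 2
            then impW μp πp p ^ 2 * σf p ^ 2 else 0) / V) ^ 2)
      ≤ minimaxRisk lam μp πp σf Rmax n := by
  rcases n.eq_zero_or_pos with rfl | hn
  · simp
  have hρ := measurable_impW μp πp
  set w : X × A → ℝ := fun p => impW μp πp p ^ 2 * σf p ^ 2
  set B := {p | impW μp πp p * σf p ^ 2 ≤ Rmax p * √(n * V / 2)} with B_def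
  have hB : MeasurableSet B := measurableSet_le (by fun_prop) (by fun_prop)
  have w_nonneg : 0 ≤ w := fun p => by positivity
  have w_int : Integrable w (Policy.joint lam μp) :=
    integrable_joint_of_nonneg lam μp (by fun_prop) w_nonneg hVfin
  have tail_eq : (fun p => if Rmax p * √(n * V / 2) < impW μp πp p * σf p ^ 2
      then impW μp πp p ^ 2 * σf p ^ 2 else 0) = Bᶜ.indicator w := by
    ext p
    simp [B_def, w, Set.indicator_apply]
  have head_le : ∫ p in B, w p ∂Policy.joint lam μp ≤ V := by
    rw [hV, Emu_eq_integral_joint lam μp w_int]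
    exact setIntegral_le_integral w_int (ae_of_all _ w_nonneg)
  rw [tail_eq, Emu_indicator_compl lam μp hB w_int, ← hV]
  exact (ENNReal.ofReal_le_ofReal <|
    mul_sq_le_sq_mul_exp_at_threshold hVpos head_le (Nat.cast_pos.2 hn)).trans <|
    setIntegral_sq_mul_exp_le_minimaxRisk habs hσm hRnn (by positivity) hB (fun _ hp => hp)
      w_int.integrableOn n

/-- Theorem 3: lower bound via reward noise. -/
theorem minimax_lower_bound_noise
    (lam : Measure X) [IsProbabilityMeasure lam] (μp πp : Policy X A)
    (habs : ∀ x a, 0 < πp.prob x a → 0 < μp.prob x a)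
    (σf Rmax : X × A → ℝ) (hσm : Measurable σf) (hRm : Measurable Rmax)
    (hσnn : ∀ p, 0 ≤ σf p) (hRnn : ∀ p, 0 ≤ Rmax p)
    (V : ℝ) (hV : V = Emu lam μp fun p => impW μp πp p ^ 2 * σf p ^ 2)
    (hVpos : 0 < V)
    (hVfin : Integrable
      (fun x => ∑ a, μp.prob x a * (impW μp πp (x, a) ^ 2 * σf (x, a) ^ 2)) lam)
    (n : ℕ) :
    ENNReal.ofReal
      (V / (32 * Real.exp 1 * n) *
        (1 - (Emu lam μp fun p =>
            if Rmax p * Real.sqrt (n * V / 2) < impW μp πp p * σf p ^ 2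
            then impW μp πp p ^ 2 * σf p ^ 2 else 0) / V) ^ 2)
      ≤ minimaxRisk lam μp πp σf Rmax n := by
  refine (ENNReal.ofReal_le_ofReal ?_).trans <|
    minimax_lower_bound_noise_general lam μp πp habs σf Rmax hσm hRm hRnn V hV hVpos hVfin n
  simp_rw [div_mul_eq_div_div _ _ (n : ℝ)]
  gcongr <;> norm_num
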